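/- Let M be a finitely generated ℤⁿ-graded R-module, let R' = R ⊗_K K[X_{n+1},…,X_{n+m}] and M' = M ⊗_K K[X_{n+1},…,X_{n+m}]. Then Hdepth_{R'} M' = Hdepth_R M + m. -/

import Mathlib

open MvPolynomial TensorProduct

noncomputable section

/-- The inclusion `R = K[X₁,…,Xₙ] → R' = K[X₁,…,X_{n+m}]`, `Xᵢ ↦ Xᵢ`. -/
def polyIncl (K : Type*) [Field K] (n m : ℕ) :
    MvPolynomial (Fin n) K →+* MvPolynomial (Fin (n + m)) K :=
  (MvPolynomial.rename (Fin.castAdd m)).toRingHom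

/-- `R'` as an `R`-algebra via the inclusion. -/
instance polyInclAlgebra (K : Type*) [Field K] (n m : ℕ) :
    Algebra (MvPolynomial (Fin n) K) (MvPolynomial (Fin (n + m)) K) :=
  (polyIncl K n m).toAlgebra

instance polyInclSMulComm (K : Type*) [Field K] (n m : ℕ) :
    SMulCommClass (MvPolynomial (Fin n) K) K (MvPolynomial (Fin (n + m)) K) :=
  ⟨fun r k x => by
    simp only [Algebra.smul_def]
    ring⟩

/-- `M' = M ⊗_K K[X_{n+1},…,X_{n+m}] = R' ⊗_R M`, the scalar extension of `M`. -/
abbrev scalarExt (K : Type*) [Field K] (n m : ℕ) (M : Type*) [AddCommGroup M]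
    [Module (MvPolynomial (Fin n) K) M] :=
  TensorProduct (MvPolynomial (Fin n) K) (MvPolynomial (Fin (n + m)) K) M

/-- The `ℤ^{n+m}`-grading of the scalar extension `M' = R' ⊗_R M`:  the degree-`a'`
component is spanned by the tensors `X^t ⊗ x` with `x` homogeneous of some degree
`c ∈ ℤⁿ` and `(c,0) + t = a'`. -/
def extGrading (K : Type*) [Field K] (n m : ℕ) {M : Type*} [AddCommGroup M]
    [Module K M] [Module (MvPolynomial (Fin n) K) M]
    (gr : (Fin n → ℤ) → Submodule K M) :
    (Fin (n + m) → ℤ) → Submodule K (scalarExt K n m M) := fun a' =>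
  Submodule.span K
    {z | ∃ (t : Fin (n + m) →₀ ℕ) (c : Fin n → ℤ) (x : M), x ∈ gr c ∧
      (∀ j : Fin n, c j + (t (Fin.castAdd m j) : ℤ) = a' (Fin.castAdd m j)) ∧
      (∀ j : Fin m, (t (Fin.natAdd n j) : ℤ) = a' (Fin.natAdd n j)) ∧
      z = (MvPolynomial.monomial t (1 : K)) ⊗ₜ[MvPolynomial (Fin n) K] x}

/-- The grading is compatible with the module structure over the polynomial ring:
multiplication by `Xᵢ` maps `N_a` into `N_{a+eᵢ}`. -/
def GradedSMul {K : Type*} [Field K] {ν : ℕ} {N : Type*} [AddCommGroup N]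
    [Module K N] [Module (MvPolynomial (Fin ν) K) N]
    (gr : (Fin ν → ℤ) → Submodule K N) : Prop :=
  ∀ (i : Fin ν) (a : Fin ν → ℤ), ∀ x ∈ gr a,
    (MvPolynomial.X i : MvPolynomial (Fin ν) K) • x ∈ gr (a + Pi.single i 1)

/-- A Hilbert decomposition `N ≅ ⊕_{i∈I} K[Zᵢ](−sᵢ)` as multigraded `K`-vector
spaces: in each degree `c`, `dim_K N_c` equals the number of indices `i`
with `sᵢ ⪯ c` and `c_j = (sᵢ)_j` for all `j ∉ Zᵢ`. -/
def IsHilbertDecomp {K : Type*} [Field K] {ν : ℕ} {N : Type*} [AddCommGroup N]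
    [Module K N] (gr : (Fin ν → ℤ) → Submodule K N)
    {ι : Type*} [Fintype ι] (Z : ι → Finset (Fin ν)) (s : ι → Fin ν → ℤ) : Prop :=
  ∀ c : Fin ν → ℤ, Module.rank K ↥(gr c) =
    (((Finset.univ : Finset ι).filter
      fun i => (∀ j, s i j ≤ c j) ∧ (∀ j, j ∉ Z i → c j = s i j)).card : Cardinal)

/-- The Hilbert depth: the maximum of the depths `min_i |Zᵢ|` over all Hilbert
decompositions (indexed by nonempty finite index sets `Fin (k+1)`). -/
def hdepth {K : Type*} [Field K] {ν : ℕ} {N : Type*} [AddCommGroup N]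
    [Module K N] (gr : (Fin ν → ℤ) → Submodule K N) : ℕ :=
  sSup {d | ∃ (k : ℕ) (Z : Fin (k + 1) → Finset (Fin ν)) (s : Fin (k + 1) → Fin ν → ℤ),
    IsHilbertDecomp gr Z s ∧
      d = Finset.univ.inf' Finset.univ_nonempty fun i => (Z i).card}

/-- The multigraded `K`-vector subspace `x·K[Z] ⊆ N`. -/
def stanleySpace (K : Type*) [Field K] {ν : ℕ} {N : Type*} [AddCommGroup N]
    [Module K N] [Module (MvPolynomial (Fin ν) K) N]
    (x : N) (Z : Finset (Fin ν)) : Submodule K N :=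
  Submodule.span K
    ((fun t : Fin ν →₀ ℕ => (MvPolynomial.monomial t (1 : K)) • x) ''
      {t : Fin ν →₀ ℕ | ∀ j ∉ Z, t j = 0})

/-- A Stanley decomposition `N = ⊕_{i∈I} mᵢK[Zᵢ]`: the `mᵢ` are homogeneous of
degree `sᵢ`, `K[Zᵢ] ∩ Ann(mᵢ) = 0`, and `N` is the direct sum of the multigraded
subspaces `mᵢK[Zᵢ]`. -/
def IsStanleyDecomp {K : Type*} [Field K] {ν : ℕ} {N : Type*} [AddCommGroup N]
    [Module K N] [Module (MvPolynomial (Fin ν) K) N]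
    (gr : (Fin ν → ℤ) → Submodule K N)
    {ι : Type*} [Fintype ι] (Z : ι → Finset (Fin ν)) (s : ι → Fin ν → ℤ)
    (m : ι → N) : Prop :=
  (∀ i, m i ∈ gr (s i)) ∧
  (∀ i, ∀ q ∈ MvPolynomial.supported K (↑(Z i) : Set (Fin ν)), q • m i = 0 → q = 0) ∧
  (iSupIndep fun i => stanleySpace K (m i) (Z i)) ∧
  (⨆ i, stanleySpace K (m i) (Z i)) = ⊤

/-- The Stanley depth: the maximum of the depths `min_i |Zᵢ|` over all Stanley
decompositions (indexed by nonempty finite index sets `Fin (k+1)`). -/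
def stdepth {K : Type*} [Field K] {ν : ℕ} {N : Type*} [AddCommGroup N]
    [Module K N] [Module (MvPolynomial (Fin ν) K) N]
    (gr : (Fin ν → ℤ) → Submodule K N) : ℕ :=
  sSup {d | ∃ (k : ℕ) (Z : Fin (k + 1) → Finset (Fin ν)) (s : Fin (k + 1) → Fin ν → ℤ)
    (m : Fin (k + 1) → N), IsStanleyDecomp gr Z s m ∧
      d = Finset.univ.inf' Finset.univ_nonempty fun i => (Z i).card}

/-!
Write a degree of `M'` as `(a, b)` with `a ∈ ℤⁿ` and `b ∈ ℤᵐ`. Multiplication by `X^b` identifies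
`M'_{(a, b)}` with `M_a` if `b ≥ 0`, and `M'_{(a, b)} = 0` otherwise. Hence adding the `m` new
variables to every piece of a Hilbert decomposition of `M` gives one of `M'`. Conversely, fix `b`
larger than all the shifts of a Hilbert decomposition of `M'`: the pieces that reach a degree
`(a, b)` are among those containing all the new variables, and these count `dim M_a`. Dropping the
new variables from them gives a Hilbert decomposition of `M` in which each piece has lost exactly
`m` variables.

Since `hdepth` is a supremum in `ℕ`, some Hilbert decomposition of `M` is needed for it to be
attained. It is built up along homogeneous submodules `N`: choose a homogeneous `x ∉ N` whose colon
ideal `N : x` is maximal. By maximality each variable either multiplies `x` into `N` or is regular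
modulo `N : x`, so that `N + Rx` differs from `N` by one piece `K[Z](-deg x)`.
-/

section HomogeneousPart

variable {K A M D : Type*} [Ring K] [Ring A] [AddCommGroup M] [Module K M] [Module A M]
  {N L : Submodule A M} (gr : D → Submodule K M)

section Decomposition

variable [DecidableEq D] [DirectSum.Decomposition gr]

lemma exists_homogeneous_notMem (hN : N ≠ ⊤) : ∃ c, ∃ x ∈ gr c, x ∉ N := by
  classical
  by_contra! h
  refine hN (eq_top_iff.2 fun y _ => ?_)
  rw [← DirectSum.sum_support_decompose gr y]
  exact N.sum_mem fun c _ => h c _ (SetLike.coe_mem _)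

lemma exists_ne_bot_of_decomposition [Nontrivial M] : ∃ c, gr c ≠ ⊥ := by
  obtain ⟨c, x, hx, hx0⟩ := exists_homogeneous_notMem gr (bot_ne_top (α := Submodule K M))
  exact ⟨c, fun hc => hx0 (hc ▸ hx)⟩

variable {gr} in
lemma isHomogeneous_sup (hN : N.IsHomogeneous gr) (hL : L.IsHomogeneous gr) :
    (N ⊔ L).IsHomogeneous gr := by
  intro c y hy
  obtain ⟨u, hu, v, hv, rfl⟩ := Submodule.mem_sup.1 hy
  rw [DirectSum.decompose_add, DirectSum.add_apply, Submodule.coe_add]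
  exact Submodule.add_mem_sup (hN c hu) (hL c hv)

end Decomposition

variable [SMul K A] [IsScalarTower K A M]

/-- The grading `c ↦ N_c = N ∩ M_c` that a submodule `N` inherits from a grading of `M`; it is a
grading in the proper sense when `N` is homogeneous. -/
def homogeneousPart (N : Submodule A M) (c : D) : Submodule K M :=
  gr c ⊓ N.restrictScalars K

lemma homogeneousPart_bot (c : D) :
    homogeneousPart gr (⊥ : Submodule A M) c = ⊥ := by
  simp [homogeneousPart]

lemma homogeneousPart_top :
    homogeneousPart gr (⊤ : Submodule A M) = gr := by
  ext c y
  simp [homogeneousPart]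

variable {gr} in
lemma homogeneousPart_sup [DecidableEq D] [DirectSum.Decomposition gr]
    (hN : N.IsHomogeneous gr) (hL : L.IsHomogeneous gr) (c : D) :
    homogeneousPart gr (N ⊔ L) c = homogeneousPart gr N c ⊔ homogeneousPart gr L c := by
  refine le_antisymm ?_ (sup_le (inf_le_inf_left _ ?_) (inf_le_inf_left _ ?_))
  · rintro y ⟨hyc, hy⟩
    obtain ⟨u, hu, v, hv, rfl⟩ := Submodule.mem_sup.1 (show y ∈ N ⊔ L from hy)
    rw [← DirectSum.decompose_of_mem_same gr hyc, DirectSum.decompose_add, DirectSum.add_apply,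
      Submodule.coe_add]
    exact Submodule.add_mem_sup ⟨SetLike.coe_mem _, hN c hu⟩ ⟨SetLike.coe_mem _, hL c hv⟩
  · exact fun _ hy => Submodule.mem_sup_left (S := N) hy
  · exact fun _ hy => Submodule.mem_sup_right (S := N) hy

end HomogeneousPart

section ColonRegular

variable {A M : Type*} [CommRing A] [AddCommGroup M] [Module A M]

/-- The elements of `A` that are nonzerodivisors modulo the colon ideal `N : x`. -/
def colonRegular (N : Submodule A M) (x : M) : Submonoid A where
  carrier := {r | ∀ q : A, (q * r) • x ∈ N → q • x ∈ N}
  one_mem' q hq := by rwa [mul_one] at hq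
  mul_mem' {r s} hr hs q hq := hr q (hs (q * r) (by rwa [mul_assoc]))

lemma mem_colonRegular_of_colon_eq {N : Submodule A M} {x : M} {r : A}
    (h : N.colon {r • x} = N.colon {x}) : r ∈ colonRegular N x := by
  intro q hq
  rw [mul_smul] at hq
  exact Submodule.mem_colon_singleton.1 (h ▸ Submodule.mem_colon_singleton.2 hq)

lemma smul_notMem_of_mem_colonRegular {N : Submodule A M} {x : M} (hx : x ∉ N) {r : A}
    (hr : r ∈ colonRegular N x) : r • x ∉ N := by
  intro h
  rw [← one_mul r] at h
  exact hx (one_smul A x ▸ hr 1 h)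

lemma monomial_smul_mem_iff {K σ : Type*} [CommRing K]
    [Module (MvPolynomial σ K) M] {N : Submodule (MvPolynomial σ K) M} {x : M} (hx : x ∉ N)
    (hreg : ∀ i, (X i : MvPolynomial σ K) • x ∉ N → X i ∈ colonRegular N x) (t : σ →₀ ℕ) :
    (monomial t (1 : K) : MvPolynomial σ K) • x ∈ N ↔
      ∃ i, (X i : MvPolynomial σ K) • x ∈ N ∧ t i ≠ 0 := by
  constructor
  · contrapose!
    intro ht
    refine smul_notMem_of_mem_colonRegular hx ?_
    rw [monomial_eq, C_1, one_mul]
    exact Submonoid.prod_mem _ fun i hi => Submonoid.pow_mem _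
      (hreg i fun hi' => Finsupp.mem_support_iff.1 hi (ht i hi')) _
  · rintro ⟨i, hi, hti⟩
    obtain ⟨q, hq⟩ : (X i : MvPolynomial σ K) ∣ monomial t 1 := X_dvd_monomial.2 (.inr hti)
    rw [hq, mul_comm, mul_smul]
    exact N.smul_mem q hi

end ColonRegular

section GradedModule

/-- The multidegree in `ℤ^σ` of the monomial `X^t`. -/
def exponentDegree {σ : Type*} : (σ →₀ ℕ) →+ (σ → ℤ) where
  toFun t j := t j
  map_zero' := by ext; simp
  map_add' t u := by ext; simp

@[simp]
lemma exponentDegree_apply {σ : Type*} (t : σ →₀ ℕ) (j : σ) : exponentDegree t j = t j := rfl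

lemma exponentDegree_single {σ : Type*} [DecidableEq σ] (i : σ) (k : ℕ) :
    exponentDegree (Finsupp.single i k) = Pi.single i (k : ℤ) := by
  ext j
  simp [Finsupp.single_apply, Pi.single_apply, eq_comm]

lemma exponentDegree_injective {σ : Type*} :
    Function.Injective (exponentDegree : (σ →₀ ℕ) → σ → ℤ) := by
  intro t u h
  ext j
  exact Nat.cast_injective (congrFun h j)

lemma exists_add_exponentDegree_eq {σ : Type*} [Finite σ] {a c : σ → ℤ} (h : ∀ j, a j ≤ c j) :
    ∃ t, a + exponentDegree t = c := by
  refine ⟨Finsupp.equivFunOnFinite.symm fun j => (c j - a j).toNat, funext fun j => ?_⟩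
  have := h j
  simp only [Pi.add_apply, exponentDegree_apply, Finsupp.equivFunOnFinite_symm_apply_apply]
  omega

lemma monomial_smul_eq_smul_monomial_one_smul {k σ M : Type*} [CommSemiring k] [AddCommMonoid M]
    [Module k M] [Module (MvPolynomial σ k) M] [IsScalarTower k (MvPolynomial σ k) M]
    (t : σ →₀ ℕ) (r : k) (x : M) :
    (monomial t r : MvPolynomial σ k) • x =
      r • (monomial t (1 : k) : MvPolynomial σ k) • x := by
  rw [← smul_assoc, smul_monomial, smul_eq_mul, mul_one]

variable {K : Type*} [Field K] {n : ℕ} {M : Type*} [AddCommGroup M] [Module K M]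
  [Module (MvPolynomial (Fin n) K) M] {gr : (Fin n → ℤ) → Submodule K M} {a c : Fin n → ℤ} {x : M}

lemma GradedSMul.X_pow_smul_mem (hsmul : GradedSMul gr) (i : Fin n) (k : ℕ) (hx : x ∈ gr a) :
    (X i ^ k : MvPolynomial (Fin n) K) • x ∈ gr (a + Pi.single i (k : ℤ)) := by
  induction k with
  | zero => simpa using hx
  | succ k ih =>
    rw [pow_succ', mul_smul, Nat.cast_succ, Pi.single_add, ← add_assoc]
    exact hsmul i _ _ ih

lemma GradedSMul.monomial_smul_mem (hsmul : GradedSMul gr) (t : Fin n →₀ ℕ) (hx : x ∈ gr a) :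
    (monomial t (1 : K) : MvPolynomial (Fin n) K) • x ∈ gr (a + exponentDegree t) := by
  induction t using Finsupp.induction with
  | zero => simpa using hx
  | single_add i k t _ _ ih =>
    rw [monomial_single_add, mul_smul, map_add, exponentDegree_single, add_comm (Pi.single i _),
      ← add_assoc]
    exact hsmul.X_pow_smul_mem i k ih

variable [IsScalarTower K (MvPolynomial (Fin n) K) M] [DirectSum.Decomposition gr]

lemma GradedSMul.decompose_smul_add_exponentDegree (hsmul : GradedSMul gr) (hx : x ∈ gr a)
    (r : MvPolynomial (Fin n) K) (t : Fin n →₀ ℕ) :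
    (DirectSum.decompose gr (r • x) (a + exponentDegree t) : M) =
      coeff t r • (monomial t (1 : K) : MvPolynomial (Fin n) K) • x := by
  induction r using MvPolynomial.induction_on' with
  | monomial u k =>
    rw [monomial_smul_eq_smul_monomial_one_smul, DirectSum.decompose_smul, DFinsupp.smul_apply,
      Submodule.coe_smul, coeff_monomial]
    have hu := hsmul.monomial_smul_mem u hx
    split_ifs with htu
    · subst htu
      rw [DirectSum.decompose_of_mem_same gr hu]
    · rw [DirectSum.decompose_of_mem_ne gr hu fun h =>
        htu (exponentDegree_injective (add_left_cancel h)), smul_zero, zero_smul]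
  | add p q hp hq =>
    rw [add_smul, DirectSum.decompose_add, DirectSum.add_apply, Submodule.coe_add, hp, hq,
      coeff_add, add_smul]

lemma GradedSMul.decompose_smul_eq_zero (hsmul : GradedSMul gr) (hx : x ∈ gr a)
    (hc : ∀ t, a + exponentDegree t ≠ c) (r : MvPolynomial (Fin n) K) :
    (DirectSum.decompose gr (r • x) c : M) = 0 := by
  induction r using MvPolynomial.induction_on' with
  | monomial u k =>
    rw [monomial_smul_eq_smul_monomial_one_smul, DirectSum.decompose_smul, DFinsupp.smul_apply,
      Submodule.coe_smul, DirectSum.decompose_of_mem_ne gr (hsmul.monomial_smul_mem u hx) (hc u),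
      smul_zero]
  | add p q hp hq =>
    rw [add_smul, DirectSum.decompose_add, DirectSum.add_apply, Submodule.coe_add, hp, hq,
      add_zero]

lemma GradedSMul.isHomogeneous_span_singleton (hsmul : GradedSMul gr) (hx : x ∈ gr a) :
    (Submodule.span (MvPolynomial (Fin n) K) {x}).IsHomogeneous gr := by
  intro c y hy
  obtain ⟨r, rfl⟩ := Submodule.mem_span_singleton.1 hy
  by_cases hc : ∃ t, a + exponentDegree t = c
  · obtain ⟨t, rfl⟩ := hc
    rw [hsmul.decompose_smul_add_exponentDegree hx, ← monomial_smul_eq_smul_monomial_one_smul]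
    exact Submodule.smul_mem _ _ (Submodule.mem_span_singleton_self x)
  · rw [hsmul.decompose_smul_eq_zero hx (not_exists.1 hc)]
    exact Submodule.zero_mem _

lemma GradedSMul.homogeneousPart_span_singleton_add (hsmul : GradedSMul gr) (hx : x ∈ gr a)
    (t : Fin n →₀ ℕ) :
    homogeneousPart gr (Submodule.span (MvPolynomial (Fin n) K) {x}) (a + exponentDegree t) =
      Submodule.span K {(monomial t (1 : K) : MvPolynomial (Fin n) K) • x} := by
  refine le_antisymm ?_ ((Submodule.span_singleton_le_iff_mem _ _).2
    ⟨hsmul.monomial_smul_mem t hx, Submodule.mem_span_singleton.2 ⟨_, rfl⟩⟩)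
  rintro y ⟨hyc, hy⟩
  obtain ⟨r, rfl⟩ := Submodule.mem_span_singleton.1 hy
  rw [← DirectSum.decompose_of_mem_same gr hyc, hsmul.decompose_smul_add_exponentDegree hx]
  exact Submodule.smul_mem _ _ (Submodule.mem_span_singleton_self _)

lemma GradedSMul.homogeneousPart_span_singleton_eq_bot (hsmul : GradedSMul gr) (hx : x ∈ gr a)
    (hc : ∀ t, a + exponentDegree t ≠ c) :
    homogeneousPart gr (Submodule.span (MvPolynomial (Fin n) K) {x}) c = ⊥ := by
  refine eq_bot_iff.2 ?_
  rintro y ⟨hyc, hy⟩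
  obtain ⟨r, rfl⟩ := Submodule.mem_span_singleton.1 hy
  exact (DirectSum.decompose_of_mem_same gr hyc).symm.trans (hsmul.decompose_smul_eq_zero hx hc r)

end GradedModule

section HilbertDecomp

variable {K : Type*} [Field K] {ν : ℕ} {N : Type*} [AddCommGroup N] [Module K N]
  {gr : (Fin ν → ℤ) → Submodule K N} {ι κ : Type*} [Fintype ι] [Fintype κ]
  {Z : ι → Finset (Fin ν)} {s : ι → Fin ν → ℤ}

lemma IsHilbertDecomp.reindex (h : IsHilbertDecomp gr Z s) (e : κ ≃ ι) :
    IsHilbertDecomp gr (Z ∘ e) (s ∘ e) := by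
  intro c
  rw [h c, Nat.cast_inj]
  exact (Finset.card_equiv e (by simp)).symm

lemma IsHilbertDecomp.nonempty (h : IsHilbertDecomp gr Z s) {c : Fin ν → ℤ} (hc : gr c ≠ ⊥) :
    Nonempty ι := by
  by_contra hι
  rw [not_nonempty_iff] at hι
  exact hc (Submodule.rank_eq_zero.1 (by simp [h c]))

/-- Existence of a Hilbert decomposition, over an arbitrary finite index type so that pieces can
be added freely. -/
def HasHilbertDecomp (gr : (Fin ν → ℤ) → Submodule K N) : Prop :=
  ∃ (ι : Type) (_ : Fintype ι) (Z : ι → Finset (Fin ν)) (s : ι → Fin ν → ℤ),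
    IsHilbertDecomp gr Z s

/-- The depths of all Hilbert decompositions of `gr`, with the same index types `Fin (k + 1)` as in
`hdepth`, which is the supremum of this set. -/
def hilbertDepths (gr : (Fin ν → ℤ) → Submodule K N) : Set ℕ :=
  {d | ∃ (k : ℕ) (Z : Fin (k + 1) → Finset (Fin ν)) (s : Fin (k + 1) → Fin ν → ℤ),
    IsHilbertDecomp gr Z s ∧
      d = Finset.univ.inf' Finset.univ_nonempty fun i => (Z i).card}

lemma bddAbove_hilbertDepths : BddAbove (hilbertDepths gr) := by
  refine ⟨ν, ?_⟩
  rintro _ ⟨k, Z, s, -, rfl⟩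
  exact (Finset.inf'_le _ (Finset.mem_univ 0)).trans (card_finset_fin_le (Z 0))

lemma IsHilbertDecomp.exists_mem_hilbertDepths [Nonempty ι] (h : IsHilbertDecomp gr Z s) {d : ℕ}
    (hd : ∀ i, d ≤ (Z i).card) : ∃ d' ∈ hilbertDepths gr, d ≤ d' := by
  obtain ⟨k, hk⟩ := Nat.exists_eq_succ_of_ne_zero (Fintype.card_ne_zero (α := ι))
  exact ⟨_, ⟨k, _, _, h.reindex (Fintype.equivFinOfCardEq hk).symm, rfl⟩,
    Finset.le_inf' _ _ fun i _ => hd _⟩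

lemma IsHilbertDecomp.le_hdepth [Nonempty ι] (h : IsHilbertDecomp gr Z s) {d : ℕ}
    (hd : ∀ i, d ≤ (Z i).card) : d ≤ hdepth gr := by
  obtain ⟨d', hd', hdd'⟩ := h.exists_mem_hilbertDepths hd
  exact hdd'.trans (le_csSup bddAbove_hilbertDepths hd')

lemma IsHilbertDecomp.exists_hdepth_le_card [Nonempty ι] (h : IsHilbertDecomp gr Z s) :
    ∃ (k : ℕ) (Z' : Fin (k + 1) → Finset (Fin ν)) (s' : Fin (k + 1) → Fin ν → ℤ),
      IsHilbertDecomp gr Z' s' ∧ ∀ i, hdepth gr ≤ (Z' i).card := by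
  obtain ⟨d, hd, -⟩ := h.exists_mem_hilbertDepths fun i => Nat.zero_le _
  obtain ⟨k, Z', s', h', hd'⟩ := Nat.sSup_mem ⟨d, hd⟩ bddAbove_hilbertDepths
  exact ⟨k, Z', s', h', fun i => hd'.trans_le (Finset.inf'_le _ (Finset.mem_univ i))⟩

end HilbertDecomp

section Existence

lemma rank_sup_span_singleton {K V : Type*} [DivisionRing K] [AddCommGroup V] [Module K V]
    {W : Submodule K V} {y : V} (hy : y ∉ W) :
    Module.rank K ↥(W ⊔ Submodule.span K {y}) = Module.rank K W + 1 := by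
  have hy0 : y ≠ 0 := fun h => hy (h ▸ W.zero_mem)
  have hrank : Module.rank K ↥(Submodule.span K {y}) = 1 :=
    Module.rank_eq_one_iff_finrank_eq_one.2 (finrank_span_singleton hy0)
  have hinf : W ⊓ Submodule.span K {y} = ⊥ :=
    ((Submodule.disjoint_span_singleton' hy0).2 hy).eq_bot
  have h := Submodule.rank_sup_add_rank_inf_eq W (Submodule.span K {y})
  rwa [hinf, rank_bot, add_zero, hrank] at h

variable {K : Type*} [Field K] {n : ℕ} {M : Type*} [AddCommGroup M] [Module K M]
  [Module (MvPolynomial (Fin n) K) M] {gr : (Fin n → ℤ) → Submodule K M}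
  [DirectSum.Decomposition gr] {N : Submodule (MvPolynomial (Fin n) K) M}

lemma GradedSMul.exists_X_mem_colonRegular (hsmul : GradedSMul gr) (hN : N ≠ ⊤) :
    ∃ a, ∃ x ∈ gr a, x ∉ N ∧
      ∀ i, (X i : MvPolynomial (Fin n) K) • x ∉ N → X i ∈ colonRegular N x := by
  let colons : Set (Ideal (MvPolynomial (Fin n) K)) :=
    {I | ∃ a, ∃ x ∈ gr a, x ∉ N ∧ N.colon {x} = I}
  have hcolons : colons.Nonempty := by
    obtain ⟨a, x, hx, hxN⟩ := exists_homogeneous_notMem gr hN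
    exact ⟨_, a, x, hx, hxN, rfl⟩
  obtain ⟨_, ⟨a, x, hx, hxN, rfl⟩, hmax⟩ := set_has_maximal_iff_noetherian.2 inferInstance _ hcolons
  refine ⟨a, x, hx, hxN, fun i hi => mem_colonRegular_of_colon_eq ?_⟩
  have hle : N.colon {x} ≤ N.colon {(X i : MvPolynomial (Fin n) K) • x} := by
    intro r hr
    rw [Submodule.mem_colon_singleton] at hr ⊢
    rw [smul_comm]
    exact N.smul_mem _ hr
  exact (hle.eq_of_not_lt (hmax _ ⟨_, _, hsmul i a x hx, hi, rfl⟩)).symm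

variable [IsScalarTower K (MvPolynomial (Fin n) K) M]

lemma GradedSMul.rank_homogeneousPart_sup_span_singleton (hsmul : GradedSMul gr)
    (hN : N.IsHomogeneous gr) {a : Fin n → ℤ} {x : M} (hx : x ∈ gr a) {Z : Finset (Fin n)}
    (hZ : ∀ t : Fin n →₀ ℕ, (monomial t (1 : K) : MvPolynomial (Fin n) K) • x ∈ N ↔
      ∃ i ∉ Z, t i ≠ 0) (c : Fin n → ℤ) :
    Module.rank K ↥(homogeneousPart gr (N ⊔ Submodule.span (MvPolynomial (Fin n) K) {x}) c) =
      Module.rank K ↥(homogeneousPart gr N c) +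
        if (∀ j, a j ≤ c j) ∧ ∀ j, j ∉ Z → c j = a j then 1 else 0 := by
  rw [homogeneousPart_sup hN (hsmul.isHomogeneous_span_singleton hx)]
  by_cases hac : ∀ j, a j ≤ c j
  · obtain ⟨t, rfl⟩ := exists_add_exponentDegree_eq hac
    rw [hsmul.homogeneousPart_span_singleton_add hx]
    have htx := hsmul.monomial_smul_mem t hx
    split_ifs with hc
    · refine rank_sup_span_singleton fun hmem => ?_
      obtain ⟨i, hi, hti⟩ := (hZ t).1 hmem.2
      exact hti (by simpa using hc.2 i hi)
    · have htN : (monomial t (1 : K) : MvPolynomial (Fin n) K) • x ∈ N :=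
        (hZ t).2 (by simpa using hc)
      rw [sup_eq_left.2 ?_, add_zero]
      exact (Submodule.span_singleton_le_iff_mem _ _).2 ⟨htx, htN⟩
  · rw [hsmul.homogeneousPart_span_singleton_eq_bot hx, sup_bot_eq, if_neg fun h => hac h.1,
      add_zero]
    rintro t rfl
    exact hac fun j => by simp

lemma HasHilbertDecomp.exists_gt (hsmul : GradedSMul gr) (hN : N.IsHomogeneous gr)
    (h : HasHilbertDecomp (homogeneousPart gr N)) (hN_top : N ≠ ⊤) :
    ∃ N' > N, N'.IsHomogeneous gr ∧ HasHilbertDecomp (homogeneousPart gr N') := by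
  classical
  obtain ⟨ι, _, Z, s, hZs⟩ := h
  obtain ⟨a, x, hx, hxN, hreg⟩ := hsmul.exists_X_mem_colonRegular hN_top
  let Z₀ : Finset (Fin n) := {i | (X i : MvPolynomial (Fin n) K) • x ∉ N}
  refine ⟨N ⊔ Submodule.span _ {x}, by simpa using hxN,
    isHomogeneous_sup hN (hsmul.isHomogeneous_span_singleton hx),
    Option ι, inferInstance, fun o => o.elim Z₀ Z, fun o => o.elim a s, fun c => ?_⟩
  rw [hsmul.rank_homogeneousPart_sup_span_singleton hN hx (Z := Z₀)
    (by simpa [Z₀] using monomial_smul_mem_iff hxN hreg), hZs c, Finset.card_filter,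
    Finset.card_filter, Fintype.sum_option, add_comm]
  push_cast
  rfl

theorem GradedSMul.hasHilbertDecomp [Module.Finite (MvPolynomial (Fin n) K) M]
    (hsmul : GradedSMul gr) : HasHilbertDecomp gr := by
  have hbot : HasHilbertDecomp (homogeneousPart gr (⊥ : Submodule (MvPolynomial (Fin n) K) M)) :=
    ⟨Empty, inferInstance, Empty.elim, fun i => i.elim, fun c => by simp [homogeneousPart_bot]⟩
  obtain ⟨N, ⟨hN, hdecomp⟩, hmax⟩ := set_has_maximal_iff_noetherian.2 inferInstance
    {N : Submodule (MvPolynomial (Fin n) K) M |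
      N.IsHomogeneous gr ∧ HasHilbertDecomp (homogeneousPart gr N)}
    ⟨⊥, fun c y hy => by simp_all, hbot⟩
  obtain rfl : N = ⊤ := by
    by_contra hN_top
    obtain ⟨N', hlt, hN'⟩ := hdecomp.exists_gt hsmul hN hN_top
    exact hmax N' hN' hlt
  rwa [homogeneousPart_top] at hdecomp

end Existence

section ScalarExtension

lemma tmul_injective_of_apply_eq_one {A P M : Type*} [CommRing A] [AddCommGroup P] [Module A P]
    [AddCommGroup M] [Module A M] (f : P →ₗ[A] A) {p : P} (hp : f p = 1) :
    Function.Injective fun x : M => p ⊗ₜ[A] x := by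
  refine Function.LeftInverse.injective
    (g := fun z => TensorProduct.lid A M (f.rTensor M z)) fun x => ?_
  simp only [LinearMap.rTensor_tmul, TensorProduct.lid_tmul, hp, one_smul]

variable {K : Type*} [Field K] {n m : ℕ}

lemma smul_eq_rename_mul (r : MvPolynomial (Fin n) K) (p : MvPolynomial (Fin (n + m)) K) :
    r • p = rename (Fin.castAdd m) r * p := rfl

instance polyInclIsScalarTower :
    IsScalarTower K (MvPolynomial (Fin n) K) (MvPolynomial (Fin (n + m)) K) where
  smul_assoc k r p := by simp only [smul_eq_rename_mul, map_smul, smul_mul_assoc]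

/-- The `R`-algebra map `R' = K[X₁,…,X_{n+m}] → R[X_{n+1},…,X_{n+m}]` that separates the old
variables from the new ones. -/
def separateVars (K : Type*) [Field K] (n m : ℕ) :
    MvPolynomial (Fin (n + m)) K →ₐ[MvPolynomial (Fin n) K]
      MvPolynomial (Fin m) (MvPolynomial (Fin n) K) where
  __ := aeval (R := K) (Fin.addCases (fun i => C (X i)) X)
  commutes' r := by
    change aeval _ (rename (Fin.castAdd m) r) = C r
    rw [aeval_rename]
    exact DFunLike.congr_fun (algHom_ext
      (g := IsScalarTower.toAlgHom K _ (MvPolynomial (Fin m) (MvPolynomial (Fin n) K)))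
      fun i => by simp [algebraMap_eq]) r

lemma separateVars_rename_natAdd (p : MvPolynomial (Fin m) K) :
    separateVars K n m (rename (Fin.natAdd n) p) = MvPolynomial.map C p := by
  change aeval _ (rename (Fin.natAdd n) p) = _
  rw [aeval_rename]
  exact DFunLike.congr_fun (algHom_ext (g := mapAlgHom (Algebra.ofId K _)) fun j => by simp) p

lemma monomial_eq_smul_rename_natAdd (t : Fin (n + m) →₀ ℕ) :
    monomial t (1 : K) =
      monomial (t.comapDomain (Fin.castAdd m) (Fin.castAdd_injective n m).injOn) (1 : K) •
        rename (Fin.natAdd n)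
          (monomial (t.comapDomain (Fin.natAdd n) (Fin.natAdd_injective m n).injOn) (1 : K)) := by
  rw [smul_eq_rename_mul]
  simp only [monic_monomial_eq, Finsupp.prod_fintype, pow_zero, implies_true, map_prod, map_pow,
    rename_X, Fin.prod_univ_add, Finsupp.comapDomain_apply]

variable {M : Type*} [AddCommGroup M] [Module K M] [Module (MvPolynomial (Fin n) K) M]
  {gr : (Fin n → ℤ) → Submodule K M}

lemma extGrading_eq_bot {a' : Fin (n + m) → ℤ} {j : Fin m} (hj : a' (Fin.natAdd n j) < 0) :
    extGrading K n m gr a' = ⊥ := by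
  rw [extGrading, Submodule.span_eq_bot]
  rintro _ ⟨t, c, x, -, -, ht, -⟩
  have := ht j
  omega

variable [IsScalarTower K (MvPolynomial (Fin n) K) M]

/-- The map `M → M'`, `x ↦ X^b ⊗ x`, for a monomial `X^b` in the `m` new variables. -/
def tmulNewMonomial (K : Type*) [Field K] {n m : ℕ} (M : Type*) [AddCommGroup M] [Module K M]
    [Module (MvPolynomial (Fin n) K) M] [IsScalarTower K (MvPolynomial (Fin n) K) M]
    (b : Fin m →₀ ℕ) : M →ₗ[K] scalarExt K n m M :=
  (TensorProduct.mk (MvPolynomial (Fin n) K) (MvPolynomial (Fin (n + m)) K) M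
    (rename (Fin.natAdd n) (monomial b 1))).restrictScalars K

lemma tmulNewMonomial_injective (b : Fin m →₀ ℕ) :
    Function.Injective (tmulNewMonomial K (n := n) M b) := by
  refine tmul_injective_of_apply_eq_one
    (lcoeff _ b ∘ₗ (separateVars K n m).toLinearMap) ?_
  simp [separateVars_rename_natAdd]

lemma GradedSMul.extGrading_append (hsmul : GradedSMul gr) (a : Fin n → ℤ) (b : Fin m →₀ ℕ) :
    extGrading K n m gr (Fin.append a (exponentDegree b)) =
      (gr a).map (tmulNewMonomial K M b) := by
  refine le_antisymm (Submodule.span_le.2 ?_) ?_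
  · rintro _ ⟨t, c, x, hx, hc, hb, rfl⟩
    obtain rfl : c + exponentDegree
        (t.comapDomain (Fin.castAdd m) (Fin.castAdd_injective n m).injOn) = a :=
      funext fun j => by simpa using hc j
    obtain rfl : t.comapDomain (Fin.natAdd n) (Fin.natAdd_injective m n).injOn = b :=
      Finsupp.ext fun j => by simpa using hb j
    rw [monomial_eq_smul_rename_natAdd t, TensorProduct.smul_tmul]
    exact Submodule.mem_map_of_mem (hsmul.monomial_smul_mem _ hx)
  · rintro _ ⟨x, hx, rfl⟩
    refine Submodule.subset_span
      ⟨b.mapDomain (Fin.natAdd n), a, x, hx, fun j => ?_, fun j => ?_, ?_⟩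
    · have hj : Fin.castAdd m j ∉ Set.range (Fin.natAdd n) := by
        rintro ⟨i, hi⟩
        simp only [Fin.ext_iff, Fin.val_natAdd, Fin.val_castAdd] at hi
        omega
      simp [Finsupp.mapDomain_of_notMem_range b (Fin.castAdd m j) hj]
    · simp [Finsupp.mapDomain_apply (Fin.natAdd_injective m n)]
    · rw [← rename_monomial]
      rfl

lemma GradedSMul.rank_extGrading_eq_natCast_iff (hsmul : GradedSMul gr) {a' : Fin (n + m) → ℤ}
    (ha' : ∀ j, 0 ≤ a' (Fin.natAdd n j)) (r : ℕ) :
    Module.rank K ↥(extGrading K n m gr a') = r ↔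
      Module.rank K ↥(gr (a' ∘ Fin.castAdd m)) = r := by
  obtain ⟨b, hb⟩ := exists_add_exponentDegree_eq (a := 0) ha'
  have hsplit : a' = Fin.append (a' ∘ Fin.castAdd m) (exponentDegree b) := by
    rw [← zero_add (exponentDegree b), hb]
    exact (Fin.append_castAdd_natAdd (f := a')).symm
  have hrank := ((gr (a' ∘ Fin.castAdd m)).equivMapOfInjective _
    (tmulNewMonomial_injective (K := K) (n := n) (M := M) b)).lift_rank_eq
  rw [← hsmul.extGrading_append, ← hsplit] at hrank
  rw [← Cardinal.lift_eq_nat_iff, ← hrank, Cardinal.lift_eq_nat_iff]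

end ScalarExtension

section HilbertDecompScalarExtension

lemma card_filter_and_eq_card_filter_subtype {ι : Type*} [Fintype ι] (p q : ι → Prop)
    [DecidablePred p] [DecidablePred q] :
    Finset.card {i | p i ∧ q i} = Finset.card {i : {i // p i} | q i} := by
  have hsubtype : ({i : {i // p i} | q i} : Finset _) = Finset.subtype p {i | q i} := by
    ext
    simp
  rw [hsubtype, Finset.card_subtype, Finset.filter_filter]
  simp only [and_comm]

variable {n m : ℕ}

lemma card_eq_card_castAdd_add_card_natAdd (Z : Finset (Fin (n + m))) :
    Z.card = Finset.card {j | Fin.castAdd m j ∈ Z} + Finset.card {j | Fin.natAdd n j ∈ Z} := by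
  simp only [Finset.card_filter, ← Fin.sum_univ_add (fun j => if j ∈ Z then 1 else 0)]
  simp

/-- The set of variables `Z ∪ {X_{n+1},…,X_{n+m}}`. -/
def adjoinNewVars (m : ℕ) (Z : Finset (Fin n)) : Finset (Fin (n + m)) :=
  (Z.disjSum Finset.univ).map finSumFinEquiv.toEmbedding

@[simp]
lemma castAdd_mem_adjoinNewVars {Z : Finset (Fin n)} {j : Fin n} :
    Fin.castAdd m j ∈ adjoinNewVars m Z ↔ j ∈ Z := by
  simp [adjoinNewVars, Finset.mem_map_equiv]

@[simp]
lemma natAdd_mem_adjoinNewVars {Z : Finset (Fin n)} {j : Fin m} :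
    Fin.natAdd n j ∈ adjoinNewVars m Z := by
  simp [adjoinNewVars, Finset.mem_map_equiv]

lemma card_adjoinNewVars (Z : Finset (Fin n)) : (adjoinNewVars m Z).card = Z.card + m := by
  simp [adjoinNewVars]

/-- The variables among `X₁,…,Xₙ` that belong to `Z`. -/
def oldVars (Z : Finset (Fin (n + m))) : Finset (Fin n) := {j | Fin.castAdd m j ∈ Z}

@[simp]
lemma mem_oldVars {Z : Finset (Fin (n + m))} {j : Fin n} :
    j ∈ oldVars Z ↔ Fin.castAdd m j ∈ Z := by
  simp [oldVars]

lemma card_le_card_oldVars_add (Z : Finset (Fin (n + m))) : Z.card ≤ (oldVars Z).card + m := by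
  rw [card_eq_card_castAdd_add_card_natAdd]
  exact Nat.add_le_add_left (card_finset_fin_le _) _

variable {K : Type*} [Field K] {M : Type*} [AddCommGroup M] [Module K M]
  [Module (MvPolynomial (Fin n) K) M] [IsScalarTower K (MvPolynomial (Fin n) K) M]
  {gr : (Fin n → ℤ) → Submodule K M} {ι : Type*} [Fintype ι]

lemma IsHilbertDecomp.to_extGrading {Z : ι → Finset (Fin n)} {s : ι → Fin n → ℤ}
    (h : IsHilbertDecomp gr Z s) (hsmul : GradedSMul gr) :
    IsHilbertDecomp (extGrading K n m gr) (fun i => adjoinNewVars m (Z i))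
      (fun i => Fin.append (s i) 0) := by
  intro c
  by_cases hc : ∀ j : Fin m, 0 ≤ c (Fin.natAdd n j)
  · rw [hsmul.rank_extGrading_eq_natCast_iff hc, h]
    simp [Fin.forall_fin_add, hc]
  · obtain ⟨j, hj⟩ : ∃ j : Fin m, c (Fin.natAdd n j) < 0 := by simpa using hc
    rw [extGrading_eq_bot hj, rank_bot, eq_comm, Nat.cast_eq_zero, Finset.card_eq_zero,
      Finset.filter_eq_empty_iff]
    rintro i - ⟨hs, -⟩
    exact hj.not_ge (by simpa using hs (Fin.natAdd n j))

lemma le_append_const_and_eq_iff {Z : Finset (Fin (n + m))} {s : Fin (n + m) → ℤ} {b : ℤ}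
    (hb : ∀ j, s (Fin.natAdd n j) < b) (a : Fin n → ℤ) :
    ((∀ j, s j ≤ Fin.append a (fun _ : Fin m => b) j) ∧
        ∀ j, j ∉ Z → Fin.append a (fun _ : Fin m => b) j = s j) ↔
      (∀ j, Fin.natAdd n j ∈ Z) ∧ (∀ j, s (Fin.castAdd m j) ≤ a j) ∧
        ∀ j, j ∉ oldVars Z → a j = s (Fin.castAdd m j) := by
  have hnew (j) : Fin.natAdd n j ∉ Z → b ≠ s (Fin.natAdd n j) := fun _ => (hb j).ne'
  simp only [Fin.forall_fin_add, Fin.append_left, Fin.append_right, mem_oldVars]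
  grind

lemma IsHilbertDecomp.of_extGrading {Z : ι → Finset (Fin (n + m))} {s : ι → Fin (n + m) → ℤ}
    (h : IsHilbertDecomp (extGrading K n m gr) Z s) (hsmul : GradedSMul gr) :
    IsHilbertDecomp gr (fun i : {i // ∀ j, Fin.natAdd n j ∈ Z i} => oldVars (Z i))
      (fun i => s i ∘ Fin.castAdd m) := by
  intro a
  obtain ⟨B, hB⟩ := (Set.finite_range fun p : ι × Fin m => s p.1 (Fin.natAdd n p.2)).bddAbove
  obtain ⟨b, hb₀, hb⟩ : ∃ b : ℤ, 0 ≤ b ∧ ∀ i j, s i (Fin.natAdd n j) < b :=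
    ⟨max 0 B + 1, by positivity, fun i j =>
      Int.lt_add_one_of_le (le_max_of_le_right (hB ⟨(i, j), rfl⟩))⟩
  have hrank := (hsmul.rank_extGrading_eq_natCast_iff (by simpa using fun _ => hb₀) _).1
    (h (Fin.append a fun _ => b))
  rw [show Fin.append a (fun _ => b) ∘ Fin.castAdd m = a from funext (Fin.append_left a _)] at hrank
  rw [hrank, Nat.cast_inj]
  simp only [le_append_const_and_eq_iff (hb _)]
  exact card_filter_and_eq_card_filter_subtype _ _

end HilbertDecompScalarExtension

/-- **Proposition.**  Let `M` be a finitely generated multigraded module over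
`R = K[X₁,…,Xₙ]` and `M' = M ⊗_K K[X_{n+1},…,X_{n+m}]` (with its `ℤ^{n+m}`-grading)
the module over `R' = K[X₁,…,X_{n+m}]` obtained by scalar extension.  Then
`Hdepth_{R'} M' = Hdepth_R M + m`. -/
theorem hdepth_scalarExtension
    {K : Type*} [Field K] {n m : ℕ}
    (M : Type*) [AddCommGroup M] [Module K M]
    [Module (MvPolynomial (Fin n) K) M]
    [IsScalarTower K (MvPolynomial (Fin n) K) M]
    [Module.Finite (MvPolynomial (Fin n) K) M] [Nontrivial M]
    (gr : (Fin n → ℤ) → Submodule K M) [DirectSum.Decomposition gr]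
    (hsmul : GradedSMul gr) :
    hdepth (extGrading K n m gr) = hdepth gr + m := by
  obtain ⟨c, hc⟩ := exists_ne_bot_of_decomposition gr
  obtain ⟨ι, _, Z, s, h⟩ := hsmul.hasHilbertDecomp
  have : Nonempty ι := h.nonempty hc
  refine le_antisymm ?_ ?_
  · obtain ⟨k, Z', s', h', hZ'⟩ := (h.to_extGrading (m := m) hsmul).exists_hdepth_le_card
    have := (h'.of_extGrading hsmul).nonempty hc
    rw [← tsub_le_iff_right]
    exact (h'.of_extGrading hsmul).le_hdepth fun i =>
      tsub_le_iff_right.2 ((hZ' i).trans (card_le_card_oldVars_add _))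
  · obtain ⟨k, Z', s', h', hZ'⟩ := h.exists_hdepth_le_card
    refine (h'.to_extGrading hsmul).le_hdepth fun i => ?_
    rw [card_adjoinNewVars]
    exact Nat.add_le_add_right (hZ' i) m
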